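/- arXiv:1412.7480 — 2 statements merged into one kernel-verified Lean document; each statement's English description precedes it below -/
import Mathlib

section
/- Let μ and ν be Borel probability measures on ℝᵐ with finite first moments. There exists a pair of random vectors (X, Y) with X distributed as μ, Y distributed as ν, and E[Y | X] = X almost surely (i.e. a one-step martingale with marginals μ and ν) if and only if μ is dominated by ν in the convex order (∫ f dμ ≤ ∫ f dν for all convex f : ℝᵐ → ℝ). -/
open MeasureTheory Filter Topology

/-- A variant of M. Riesz extension for a functional on a subspace given through a
parametrization `T`. -/
theorem exists_nonneg_linearMap_comp_eq {V W : Type*} [AddCommGroup V] [Module ℝ V]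
    [AddCommMonoid W] [Module ℝ W] (s : PointedCone ℝ V) (T : W →ₗ[ℝ] V) (l : W →ₗ[ℝ] ℝ)
    (nonneg : ∀ w, T w ∈ s → 0 ≤ l w) (dense : ∀ v, ∃ w, T w + v ∈ s) :
    ∃ g : V →ₗ[ℝ] ℝ, (∀ w, g (T w) = l w) ∧ ∀ v ∈ s, 0 ≤ g v := by
  let _ : AddCommGroup W := Module.addCommMonoidToAddCommGroup ℝ
  have hker : LinearMap.ker T ≤ LinearMap.ker l := by
    intro w hw
    have hw : T w = 0 := hw
    have h1 := nonneg w (by rw [hw]; exact s.zero_mem)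
    have h2 := nonneg (-w) (by rw [map_neg, hw, neg_zero]; exact s.zero_mem)
    rw [map_neg] at h2
    exact le_antisymm (by linarith) h1
  let f : V →ₗ.[ℝ] ℝ := ⟨LinearMap.range T,
    (LinearMap.ker T).liftQ l hker ∘ₗ T.quotKerEquivRange.symm.toLinearMap⟩
  have hf : ∀ w, f ⟨T w, LinearMap.mem_range_self T w⟩ = l w := by
    intro w
    change (LinearMap.ker T).liftQ l hker
      (T.quotKerEquivRange.symm ⟨T w, LinearMap.mem_range_self T w⟩) = l w
    rw [LinearMap.quotKerEquivRange_symm_apply_image T w (LinearMap.mem_range_self T w)]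
    simp
  obtain ⟨g, hg, hpos⟩ := riesz_extension s f
    (by
      rintro ⟨_, w, rfl⟩ hw
      exact (nonneg w hw).trans_eq (hf w).symm)
    (fun v => by
      obtain ⟨w, hw⟩ := dense v
      exact ⟨⟨T w, LinearMap.mem_range_self T w⟩, hw⟩)
  exact ⟨g, fun w => (hg ⟨T w, LinearMap.mem_range_self T w⟩).trans (hf w), hpos⟩

/-- The real functions of at most linear growth on a normed space. -/
def linearGrowth (X : Type*) [NormedAddCommGroup X] : Submodule ℝ (X → ℝ) where
  carrier := {f | ∃ C, ∀ x, |f x| ≤ C * (1 + ‖x‖)}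
  zero_mem' := ⟨0, by simp⟩
  add_mem' := by
    rintro f g ⟨C, hC⟩ ⟨D, hD⟩
    refine ⟨C + D, fun x => (abs_add_le _ _).trans ?_⟩
    rw [add_mul]
    exact add_le_add (hC x) (hD x)
  smul_mem' := by
    rintro c f ⟨C, hC⟩
    refine ⟨|c| * C, fun x => ?_⟩
    rw [Pi.smul_apply, smul_eq_mul, abs_mul, mul_assoc]
    exact mul_le_mul_of_nonneg_left (hC x) (abs_nonneg c)

theorem mem_linearGrowth_of_abs_le {X : Type*} [NormedAddCommGroup X] {f : X → ℝ} {C : ℝ}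
    (h : ∀ x, |f x| ≤ C * (1 + ‖x‖)) : f ∈ linearGrowth X := ⟨C, h⟩

theorem integrable_of_mem_linearGrowth {X : Type*} [NormedAddCommGroup X] [MeasurableSpace X]
    {m : Measure X} [IsFiniteMeasure m] (hm : Integrable (fun x => ‖x‖) m) {f : X → ℝ}
    (hf : f ∈ linearGrowth X) (hfm : AEStronglyMeasurable f m) : Integrable f m := by
  obtain ⟨C, hC⟩ := hf
  exact (((integrable_const 1).add hm).const_mul C).mono' hfm (.of_forall hC)

/-- `1 + ‖x‖` outside the open ball of radius `n`, and zero inside. -/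
noncomputable def growthTail {X : Type*} [NormedAddCommGroup X] (n : ℕ) : X → ℝ :=
  {x : X | (n : ℝ) ≤ ‖x‖}.indicator fun x => 1 + ‖x‖

section growthTail

variable {X : Type*} [NormedAddCommGroup X]

theorem growthTail_nonneg (n : ℕ) (x : X) : 0 ≤ growthTail n x :=
  Set.indicator_nonneg (fun _ _ => by positivity) x

theorem growthTail_le (n : ℕ) (x : X) : growthTail n x ≤ 1 + ‖x‖ :=
  Set.indicator_le_self' (fun _ _ => by positivity) x

theorem abs_growthTail_le (n : ℕ) (x : X) : |growthTail n x| ≤ 1 * (1 + ‖x‖) := by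
  rw [abs_of_nonneg (growthTail_nonneg n x), one_mul]
  exact growthTail_le n x

theorem growthTail_mem (n : ℕ) : growthTail (X := X) n ∈ linearGrowth X :=
  mem_linearGrowth_of_abs_le (abs_growthTail_le n)

theorem measurable_growthTail [MeasurableSpace X] [BorelSpace X] (n : ℕ) :
    Measurable (growthTail (X := X) n) :=
  (measurable_norm.const_add 1).indicator (measurableSet_le measurable_const measurable_norm)

theorem tendsto_integral_growthTail [MeasurableSpace X] [BorelSpace X]
    {m : Measure X} [IsFiniteMeasure m] (hm : Integrable (fun x => ‖x‖) m) :
    Tendsto (fun n => ∫ x, growthTail n x ∂m) atTop (𝓝 0) := by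
  have : Tendsto (fun n => ∫ x, growthTail n x ∂m) atTop (𝓝 (∫ _, (0 : ℝ) ∂m)) := by
    refine tendsto_integral_of_dominated_convergence (fun x => 1 + ‖x‖)
      (fun n => (measurable_growthTail n).aestronglyMeasurable)
      ((integrable_const 1).add hm)
      (fun n => .of_forall fun x => by simpa using abs_growthTail_le n x)
      (.of_forall fun x => tendsto_const_nhds.congr' ?_)
    filter_upwards [eventually_gt_atTop ⌈‖x‖⌉₊] with n hn
    refine (Set.indicator_of_notMem ?_ _).symm
    simpa using (Nat.le_ceil ‖x‖).trans_lt (Nat.cast_lt.2 hn)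
  simpa using this

theorem growthTail_prod_le {Y : Type*} [NormedAddCommGroup Y] (n : ℕ) (p : X × Y) :
    growthTail n p ≤ growthTail n p.1 + growthTail n p.2 := by
  by_cases hp : (n : ℝ) ≤ ‖p‖
  · rw [growthTail, Set.indicator_of_mem (by exact hp)]
    rcases max_cases ‖p.1‖ ‖p.2‖ with ⟨h, -⟩ | ⟨h, -⟩
    · rw [Prod.norm_def, h] at hp
      have : growthTail n p.1 = 1 + ‖p.1‖ := Set.indicator_of_mem (by exact hp) _
      rw [this, Prod.norm_def, h]
      linarith [growthTail_nonneg n p.2]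
    · rw [Prod.norm_def, h] at hp
      have : growthTail n p.2 = 1 + ‖p.2‖ := Set.indicator_of_mem (by exact hp) _
      rw [this, Prod.norm_def, h]
      linarith [growthTail_nonneg n p.1]
  · rw [growthTail, Set.indicator_of_notMem (by exact hp)]
    exact add_nonneg (growthTail_nonneg _ _) (growthTail_nonneg _ _)

end growthTail

/-- The continuous function equal to one on the ball of radius `n` and to zero outside
the ball of radius `n + 1`, interpolating linearly in the norm. -/
noncomputable def normCutoff {X : Type*} [NormedAddCommGroup X] (n : ℕ) (x : X) : ℝ :=
  max 0 (min 1 (n + 1 - ‖x‖))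

section normCutoff

variable {X : Type*} [NormedAddCommGroup X]

theorem normCutoff_nonneg (n : ℕ) (x : X) : 0 ≤ normCutoff n x := le_max_left _ _

theorem normCutoff_le_one (n : ℕ) (x : X) : normCutoff n x ≤ 1 :=
  max_le zero_le_one (min_le_left _ _)

theorem normCutoff_eq_one {n : ℕ} {x : X} (h : ‖x‖ ≤ n) : normCutoff n x = 1 := by
  rw [normCutoff, min_eq_left (by linarith), max_eq_right zero_le_one]

theorem continuous_normCutoff (n : ℕ) : Continuous (normCutoff (X := X) n) := by
  unfold normCutoff
  fun_prop

theorem hasCompactSupport_normCutoff [ProperSpace X] (n : ℕ) :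
    HasCompactSupport (normCutoff (X := X) n) := by
  refine HasCompactSupport.intro (isCompact_closedBall 0 (n + 1)) fun x hx => ?_
  rw [mem_closedBall_zero_iff, not_le] at hx
  exact max_eq_left ((min_le_right _ _).trans (by linarith))

theorem tendsto_normCutoff (x : X) : Tendsto (fun n => normCutoff n x) atTop (𝓝 1) := by
  refine tendsto_const_nhds.congr' ?_
  filter_upwards [eventually_ge_atTop ⌈‖x‖⌉₊] with n hn
  exact (normCutoff_eq_one ((Nat.le_ceil _).trans (Nat.cast_le.2 hn))).symm

theorem one_add_norm_mul_one_sub_normCutoff_le (n : ℕ) (x : X) :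
    (1 + ‖x‖) * (1 - normCutoff n x) ≤ growthTail n x := by
  rcases le_or_gt ‖x‖ n with h | h
  · rw [normCutoff_eq_one h, sub_self, mul_zero]
    exact growthTail_nonneg n x
  · rw [growthTail, Set.indicator_of_mem (by exact h.le)]
    exact mul_le_of_le_one_right (by positivity) (by linarith [normCutoff_nonneg n x])

end normCutoff

open CompactlySupported in
/-- A positive functional on functions of linear growth with vanishing tails is represented
by a measure on the continuous functions of linear growth. -/
theorem exists_measure_integral_eq_of_tendsto_growthTail {X : Type*} [NormedAddCommGroup X]
    [ProperSpace X] [MeasurableSpace X] [BorelSpace X] (L : linearGrowth X →ₗ[ℝ] ℝ)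
    (hpos : ∀ F : linearGrowth X, (∀ x, 0 ≤ F.1 x) → 0 ≤ L F)
    (htail : Tendsto (fun n => L ⟨growthTail n, growthTail_mem n⟩) atTop (𝓝 0)) :
    ∃ π : Measure X, ∀ F : linearGrowth X, Continuous F.1 →
      Integrable F.1 π ∧ ∫ x, F.1 x ∂π = L F := by
  have hmono : ∀ F G : linearGrowth X, (∀ x, F.1 x ≤ G.1 x) → L F ≤ L G := by
    intro F G h
    have := hpos (G - F) fun x => sub_nonneg.2 (h x)
    rw [map_sub] at this
    linarith
  have hmem : ∀ f : C_c(X, ℝ), ⇑f ∈ linearGrowth X := by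
    intro f
    obtain ⟨C, hC⟩ := f.hasCompactSupport.exists_bound_of_continuous f.continuous
    refine ⟨C, fun x => (hC x).trans ?_⟩
    have hC0 : 0 ≤ C := (norm_nonneg _).trans (hC x)
    nlinarith [norm_nonneg x]
  let Λ : C_c(X, ℝ) →ₚ[ℝ] ℝ := PositiveLinearMap.mk₀
    { toFun := fun f => L ⟨f, hmem f⟩
      map_add' := fun f g => L.map_add ⟨f, hmem f⟩ ⟨g, hmem g⟩
      map_smul' := fun c f => L.map_smul c ⟨f, hmem f⟩ }
    (fun f hf => hpos ⟨f, hmem f⟩ hf)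
  set π := RealRMK.rieszMeasure Λ with hπ
  have hreg : π.Regular := by rw [hπ]; infer_instance
  have hcut : ∀ (F : linearGrowth X) (n : ℕ),
      (fun x => F.1 x * normCutoff n x) ∈ linearGrowth X := by
    rintro ⟨F, C, hC⟩ n
    refine ⟨C, fun x => le_trans ?_ (hC x)⟩
    rw [abs_mul, abs_of_nonneg (normCutoff_nonneg n x)]
    exact mul_le_of_le_one_right (abs_nonneg _) (normCutoff_le_one n x)
  have hsupp : ∀ (F : X → ℝ) (n : ℕ), HasCompactSupport fun x => F x * normCutoff n x :=
    fun F n => (hasCompactSupport_normCutoff n).mul_left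
  have hint : ∀ (F : linearGrowth X), Continuous F.1 → ∀ n,
      ∫ x, F.1 x * normCutoff n x ∂π = L ⟨_, hcut F n⟩ := by
    intro F hF n
    exact RealRMK.integral_rieszMeasure Λ
      ⟨⟨_, hF.mul (continuous_normCutoff n)⟩, hsupp F.1 n⟩
  have hlim : ∀ F : linearGrowth X, Tendsto (fun n => L ⟨_, hcut F n⟩) atTop (𝓝 (L F)) := by
    intro F
    obtain ⟨C, hC⟩ := F.2
    have hC0 : 0 ≤ C := by simpa using (abs_nonneg _).trans (hC 0)
    rw [tendsto_iff_norm_sub_tendsto_zero]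
    refine squeeze_zero (fun _ => norm_nonneg _) (fun n => ?_)
      (by simpa using htail.const_mul C)
    have key : ∀ x, |F.1 x * normCutoff n x - F.1 x| ≤ C * growthTail n x := by
      intro x
      calc |F.1 x * normCutoff n x - F.1 x| = |F.1 x| * (1 - normCutoff n x) := by
            rw [show F.1 x * normCutoff n x - F.1 x = -(F.1 x * (1 - normCutoff n x)) by ring,
              abs_neg, abs_mul, abs_of_nonneg (sub_nonneg.2 (normCutoff_le_one n x))]
        _ ≤ C * (1 + ‖x‖) * (1 - normCutoff n x) :=
            mul_le_mul_of_nonneg_right (hC x) (sub_nonneg.2 (normCutoff_le_one n x))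
        _ ≤ C * growthTail n x := by
            rw [mul_assoc]
            exact mul_le_mul_of_nonneg_left (one_add_norm_mul_one_sub_normCutoff_le n x) hC0
    rw [← map_sub, Real.norm_eq_abs, abs_le, ← smul_eq_mul, ← map_smul, ← map_neg]
    exact ⟨hmono _ _ fun x => (abs_le.1 (key x)).1, hmono _ _ fun x => (abs_le.1 (key x)).2⟩
  have hw : (fun x : X => 1 + ‖x‖) ∈ linearGrowth X :=
    mem_linearGrowth_of_abs_le (C := 1) fun x => by
      rw [abs_of_nonneg (by positivity), one_mul]
  have hwc : Continuous fun x : X => 1 + ‖x‖ := by fun_prop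
  have hwint : Integrable (fun x : X => 1 + ‖x‖) π := by
    refine ⟨hwc.aestronglyMeasurable, ?_⟩
    rw [hasFiniteIntegral_iff_ofReal (.of_forall fun x => by positivity)]
    have hmc := lintegral_tendsto_of_tendsto_of_monotone (μ := π)
      (f := fun n (x : X) => ENNReal.ofReal ((1 + ‖x‖) * normCutoff n x))
      (F := fun x => ENNReal.ofReal (1 + ‖x‖))
      (fun n => (hwc.mul (continuous_normCutoff n)).measurable.ennreal_ofReal.aemeasurable)
      (.of_forall fun x n k hnk => ENNReal.ofReal_le_ofReal <|
        mul_le_mul_of_nonneg_left (by unfold normCutoff; gcongr) (by positivity))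
      (.of_forall fun x => by
        simpa using ENNReal.tendsto_ofReal ((tendsto_normCutoff x).const_mul (1 + ‖x‖)))
    refine (le_of_tendsto' hmc fun n => ?_).trans_lt
      (ENNReal.ofReal_lt_top (r := L ⟨_, hw⟩))
    rw [← ofReal_integral_eq_lintegral_ofReal (f := fun x => (1 + ‖x‖) * normCutoff n x)
      ((hwc.mul (continuous_normCutoff n)).integrable_of_hasCompactSupport (hsupp _ n))
      (.of_forall fun x => mul_nonneg (by positivity) (normCutoff_nonneg n x)),
      hint ⟨_, hw⟩ hwc n]
    exact ENNReal.ofReal_le_ofReal (hmono _ _ fun x =>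
      mul_le_of_le_one_right (by positivity) (normCutoff_le_one n x))
  refine ⟨π, fun F hF => ?_⟩
  obtain ⟨C, hC⟩ := F.2
  refine ⟨(hwint.const_mul C).mono' hF.aestronglyMeasurable (.of_forall hC), ?_⟩
  refine tendsto_nhds_unique ?_ (hlim F)
  simp_rw [← hint F hF]
  refine tendsto_integral_of_dominated_convergence (fun x => C * (1 + ‖x‖))
    (fun n => (hF.mul (continuous_normCutoff n)).aestronglyMeasurable) (hwint.const_mul C)
    (fun n => .of_forall fun x => ?_)
    (.of_forall fun x => by simpa using (tendsto_normCutoff x).const_mul (F.1 x))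
  rw [Real.norm_eq_abs, abs_mul, abs_of_nonneg (normCutoff_nonneg n x)]
  exact (mul_le_of_le_one_right (abs_nonneg _) (normCutoff_le_one n x)).trans (hC x)

/-- Weak duality for the martingale transport problem. -/
theorem integral_add_integral_nonneg_of_convexOrder {E : Type*} [NormedAddCommGroup E]
    [NormedSpace ℝ E] [FiniteDimensional ℝ E] [MeasurableSpace E] [BorelSpace E]
    {μ ν : Measure E} [IsProbabilityMeasure μ] [IsProbabilityMeasure ν]
    (hμ1 : Integrable (fun x => ‖x‖) μ) (hν1 : Integrable (fun x => ‖x‖) ν)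
    (hμν : ∀ f : E → ℝ, ConvexOn ℝ Set.univ f → Integrable f μ → Integrable f ν →
      ∫ x, f x ∂μ ≤ ∫ x, f x ∂ν)
    {a b : E → ℝ} (ha : Integrable a μ) (hb : Integrable b ν) (hbg : b ∈ linearGrowth E)
    {h : E → E →L[ℝ] ℝ} (hnonneg : ∀ x y, 0 ≤ a x + b y + h x (y - x)) :
    0 ≤ ∫ x, a x ∂μ + ∫ y, b y ∂ν := by
  have hle : ∀ y x, -a x - h x (y - x) ≤ b y := fun y x => by linarith [hnonneg x y]
  have hbdd : ∀ y, BddAbove (Set.range fun x => -a x - h x (y - x)) :=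
    fun y => ⟨b y, by rintro _ ⟨x, rfl⟩; exact hle y x⟩
  let g : E → ℝ := fun y => ⨆ x, (-a x - h x (y - x))
  have hg_le : ∀ y, g y ≤ b y := fun y => ciSup_le (hle y)
  have hg_ge : ∀ x y, -a x - h x (y - x) ≤ g y := fun x y => le_ciSup (hbdd y) x
  have hconv : ConvexOn ℝ Set.univ g := by
    refine ⟨convex_univ, fun y _ z _ s t hs ht hst => ciSup_le fun x => ?_⟩
    have hcomb : -a x - h x (s • y + t • z - x)
        = s * (-a x - h x (y - x)) + t * (-a x - h x (z - x)) := by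
      obtain rfl : t = 1 - s := by linarith
      simp only [map_sub, map_add, map_smul, smul_eq_mul]
      ring
    rw [hcomb, smul_eq_mul, smul_eq_mul]
    exact add_le_add (mul_le_mul_of_nonneg_left (hg_ge x y) hs)
      (mul_le_mul_of_nonneg_left (hg_ge x z) ht)
  have hcont : Continuous g := continuousOn_univ.1 (hconv.continuousOn isOpen_univ)
  have hgrowth : g ∈ linearGrowth E := by
    obtain ⟨C, hC⟩ := hbg
    have hC0 : 0 ≤ C := by simpa using (abs_nonneg _).trans (hC 0)
    refine ⟨C + |a 0| + ‖h 0‖, fun y => abs_le.2 ⟨?_, ?_⟩⟩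
    · have h1 := hg_ge 0 y
      have h2 := (le_abs_self _).trans ((h 0).le_opNorm y)
      rw [sub_zero] at h1
      nlinarith [le_abs_self (a 0), abs_nonneg (a 0), norm_nonneg y, norm_nonneg (h 0),
        mul_nonneg (abs_nonneg (a 0)) (norm_nonneg y), mul_nonneg hC0 (norm_nonneg y)]
    · have h1 := (hg_le y).trans ((le_abs_self _).trans (hC y))
      nlinarith [mul_nonneg (add_nonneg (abs_nonneg (a 0)) (norm_nonneg (h 0)))
        (add_nonneg zero_le_one (norm_nonneg y))]
  have hgμ := integrable_of_mem_linearGrowth hμ1 hgrowth hcont.aestronglyMeasurable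
  have hgν := integrable_of_mem_linearGrowth hν1 hgrowth hcont.aestronglyMeasurable
  have h1 := hμν g hconv hgμ hgν
  have h2 : ∫ y, g y ∂ν ≤ ∫ y, b y ∂ν := integral_mono hgν hb hg_le
  have h3 : ∫ x, -a x ∂μ ≤ ∫ x, g x ∂μ :=
    integral_mono ha.neg hgμ fun x => by simpa using hg_ge x x
  rw [integral_neg] at h3
  linarith

/-- The measurable real functions of at most linear growth on a normed space. -/
def measurableLinearGrowth (X : Type*) [NormedAddCommGroup X] [MeasurableSpace X] :
    Submodule ℝ (X → ℝ) where
  carrier := {f | Measurable f ∧ f ∈ linearGrowth X}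
  zero_mem' := ⟨measurable_const, zero_mem _⟩
  add_mem' := fun hf hg => ⟨hf.1.add hg.1, add_mem hf.2 hg.2⟩
  smul_mem' := fun c _ hf => ⟨hf.1.const_smul c, Submodule.smul_mem _ c hf.2⟩

theorem integrable_of_mem_measurableLinearGrowth {X : Type*} [NormedAddCommGroup X]
    [MeasurableSpace X] {m : Measure X} [IsFiniteMeasure m] (hm : Integrable (fun x => ‖x‖) m)
    (f : measurableLinearGrowth X) : Integrable f.1 m :=
  integrable_of_mem_linearGrowth hm f.2.2 f.2.1.aestronglyMeasurable

/-- Integration against a measure with finite first moment, as a linear map. -/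
noncomputable def integralLinearMap {X : Type*} [NormedAddCommGroup X] [MeasurableSpace X]
    {m : Measure X} [IsFiniteMeasure m] (hm : Integrable (fun x => ‖x‖) m) :
    measurableLinearGrowth X →ₗ[ℝ] ℝ where
  toFun f := ∫ x, f.1 x ∂m
  map_add' f g := integral_add (integrable_of_mem_measurableLinearGrowth hm f)
    (integrable_of_mem_measurableLinearGrowth hm g)
  map_smul' c _ := integral_const_mul c _

theorem comp_fst_mem_linearGrowth {X Y : Type*} [NormedAddCommGroup X] [NormedAddCommGroup Y]
    {f : X → ℝ} (hf : f ∈ linearGrowth X) : (fun p : X × Y => f p.1) ∈ linearGrowth (X × Y) := by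
  obtain ⟨C, hC⟩ := hf
  have hC0 : 0 ≤ C := by simpa using (abs_nonneg _).trans (hC 0)
  refine ⟨C, fun p => (hC p.1).trans ?_⟩
  gcongr
  exact norm_fst_le p

theorem comp_snd_mem_linearGrowth {X Y : Type*} [NormedAddCommGroup X] [NormedAddCommGroup Y]
    {f : Y → ℝ} (hf : f ∈ linearGrowth Y) : (fun p : X × Y => f p.2) ∈ linearGrowth (X × Y) := by
  obtain ⟨C, hC⟩ := hf
  have hC0 : 0 ≤ C := by simpa using (abs_nonneg _).trans (hC 0)
  refine ⟨C, fun p => (hC p.2).trans ?_⟩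
  gcongr
  exact norm_snd_le p

section Coupling

open BoundedContinuousFunction
open scoped ProbabilityTheory

variable {E : Type*} [NormedAddCommGroup E] [NormedSpace ℝ E]

theorem apply_sub_mem_linearGrowth (h : E →ᵇ (E →L[ℝ] ℝ)) :
    (fun p : E × E => h p.1 (p.2 - p.1)) ∈ linearGrowth (E × E) := by
  refine ⟨‖h‖ * 2, fun p => ((h p.1).le_opNorm _).trans ?_⟩
  rw [mul_assoc]
  refine mul_le_mul (h.norm_coe_le_norm _) ((norm_sub_le _ _).trans ?_) (norm_nonneg _)
    ((norm_nonneg _).trans (h.norm_coe_le_norm 0))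
  linarith [norm_fst_le p, norm_snd_le p]

/-- The function `(x, y) ↦ a x + b y + h x (y - x)`, depending linearly on `(a, b, h)`. -/
noncomputable def martingalePayoff [MeasurableSpace E] :
    measurableLinearGrowth E × measurableLinearGrowth E × (E →ᵇ (E →L[ℝ] ℝ)) →ₗ[ℝ]
      linearGrowth (E × E) where
  toFun w := ⟨fun p => w.1.1 p.1 + w.2.1.1 p.2 + w.2.2 p.1 (p.2 - p.1),
    add_mem (add_mem (comp_fst_mem_linearGrowth w.1.2.2) (comp_snd_mem_linearGrowth w.2.1.2.2))
      (apply_sub_mem_linearGrowth w.2.2)⟩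
  map_add' v w := by
    ext p
    simp only [Prod.fst_add, Prod.snd_add, Submodule.coe_add, Pi.add_apply,
      BoundedContinuousFunction.coe_add, _root_.add_apply]
    ring
  map_smul' c w := by
    ext p
    simp only [Prod.smul_fst, Prod.smul_snd, Submodule.coe_smul, Pi.smul_apply,
      BoundedContinuousFunction.coe_smul, _root_.smul_apply, smul_eq_mul,
      RingHom.id_apply]
    ring

variable [FiniteDimensional ℝ E] [MeasurableSpace E] [BorelSpace E]
  {μ ν : Measure E} [IsProbabilityMeasure μ] [IsProbabilityMeasure ν]

theorem exists_nonneg_functional_of_convexOrder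
    (hμ1 : Integrable (fun x => ‖x‖) μ) (hν1 : Integrable (fun x => ‖x‖) ν)
    (hμν : ∀ f : E → ℝ, ConvexOn ℝ Set.univ f → Integrable f μ → Integrable f ν →
      ∫ x, f x ∂μ ≤ ∫ x, f x ∂ν) :
    ∃ L : linearGrowth (E × E) →ₗ[ℝ] ℝ, (∀ F, (∀ p, 0 ≤ F.1 p) → 0 ≤ L F) ∧
      ∀ a b h, L (martingalePayoff (a, b, h)) = ∫ x, a.1 x ∂μ + ∫ y, b.1 y ∂ν := by
  let s : PointedCone ℝ (linearGrowth (E × E)) :=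
    { carrier := {F | ∀ p, 0 ≤ F.1 p}
      zero_mem' := fun _ => le_rfl
      add_mem' := fun hF hG p => add_nonneg (hF p) (hG p)
      smul_mem' := fun c _ hF p => mul_nonneg c.2 (hF p) }
  let l : measurableLinearGrowth E × measurableLinearGrowth E × (E →ᵇ (E →L[ℝ] ℝ)) →ₗ[ℝ] ℝ :=
    (integralLinearMap hμ1).comp (LinearMap.fst ℝ _ _) +
      (integralLinearMap hν1).comp ((LinearMap.fst ℝ _ _).comp (LinearMap.snd ℝ _ _))
  obtain ⟨L, hL, hpos⟩ := exists_nonneg_linearMap_comp_eq s martingalePayoff l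
    (fun w hw => integral_add_integral_nonneg_of_convexOrder hμ1 hν1 hμν
      (integrable_of_mem_measurableLinearGrowth hμ1 w.1)
      (integrable_of_mem_measurableLinearGrowth hν1 w.2.1) w.2.1.2.2 (fun x y => hw (x, y)))
    (fun F => by
      obtain ⟨C, hC⟩ := F.2
      have hC0 : 0 ≤ C := by simpa using (abs_nonneg _).trans (hC 0)
      let u : measurableLinearGrowth E := ⟨fun x => C * (1 + ‖x‖),
        (measurable_norm.const_add 1).const_mul C, C, fun x => by
          rw [abs_of_nonneg (by positivity)]⟩
      refine ⟨(u, u, 0), fun p => ?_⟩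
      have hp : ‖p‖ ≤ ‖p.1‖ + ‖p.2‖ :=
        max_le (le_add_of_nonneg_right (norm_nonneg _)) (le_add_of_nonneg_left (norm_nonneg _))
      have h1 := (abs_le.1 (hC p)).1
      have h2 := mul_le_mul_of_nonneg_left hp hC0
      change 0 ≤ C * (1 + ‖p.1‖) + C * (1 + ‖p.2‖) + (0 : E →L[ℝ] ℝ) (p.2 - p.1) + F.1 p
      rw [_root_.zero_apply]
      linarith)
  exact ⟨L, hpos, fun a b h => hL (a, b, h)⟩

theorem exists_measure_prod_of_convexOrder
    (hμ1 : Integrable (fun x => ‖x‖) μ) (hν1 : Integrable (fun x => ‖x‖) ν)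
    (hμν : ∀ f : E → ℝ, ConvexOn ℝ Set.univ f → Integrable f μ → Integrable f ν →
      ∫ x, f x ∂μ ≤ ∫ x, f x ∂ν) :
    ∃ π : Measure (E × E), IsProbabilityMeasure π ∧ π.map Prod.fst = μ ∧ π.map Prod.snd = ν ∧
      ∀ h : E →ᵇ (E →L[ℝ] ℝ), ∫ p, h p.1 (p.2 - p.1) ∂π = 0 := by
  have : ProperSpace E := FiniteDimensional.proper ℝ E
  obtain ⟨L, hpos, hL⟩ := exists_nonneg_functional_of_convexOrder hμ1 hν1 hμν
  obtain ⟨π, hπ⟩ := exists_measure_integral_eq_of_tendsto_growthTail L hpos (by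
    let t : ℕ → measurableLinearGrowth E :=
      fun n => ⟨growthTail n, measurable_growthTail n, growthTail_mem n⟩
    have hlim : Tendsto (fun n => L (martingalePayoff (t n, t n, 0))) atTop (𝓝 0) := by
      simp_rw [hL]
      simpa using (tendsto_integral_growthTail hμ1).add (tendsto_integral_growthTail hν1)
    refine squeeze_zero (fun n => hpos _ (growthTail_nonneg n)) (fun n => ?_) hlim
    rw [← sub_nonneg, ← map_sub]
    refine hpos _ fun p => ?_
    have hp := growthTail_prod_le n p
    change 0 ≤ growthTail n p.1 + growthTail n p.2 + (0 : E →L[ℝ] ℝ) (p.2 - p.1) - growthTail n p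
    rw [_root_.zero_apply]
    linarith)
  have key : ∀ (a b : measurableLinearGrowth E) (h : E →ᵇ (E →L[ℝ] ℝ)),
      Continuous a.1 → Continuous b.1 →
      ∫ p, (a.1 p.1 + b.1 p.2 + h p.1 (p.2 - p.1)) ∂π = ∫ x, a.1 x ∂μ + ∫ y, b.1 y ∂ν := by
    intro a b h ha hb
    rw [← hL a b h]
    refine (hπ (martingalePayoff (a, b, h)) ?_).2
    exact ((ha.comp continuous_fst).add (hb.comp continuous_snd)).add
      ((h.continuous.comp continuous_fst).clm_apply (continuous_snd.sub continuous_fst))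
  let ofBounded : (E →ᵇ ℝ) → measurableLinearGrowth E := fun f => ⟨f, f.continuous.measurable,
    ‖f‖, fun x => (f.norm_coe_le_norm x).trans
      (le_mul_of_one_le_right (norm_nonneg f) (by linarith [norm_nonneg x]))⟩
  have hone : (fun _ : E × E => (1 : ℝ)) ∈ linearGrowth (E × E) :=
    ⟨1, fun p => by simp⟩
  have hfin : IsFiniteMeasure π :=
    (integrable_const_iff_isFiniteMeasure one_ne_zero).1 (hπ ⟨_, hone⟩ continuous_const).1
  have hfst : π.map Prod.fst = μ := by
    refine ext_of_forall_integral_eq_of_IsFiniteMeasure fun f => ?_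
    rw [integral_map measurable_fst.aemeasurable f.continuous.aestronglyMeasurable]
    simpa using key (ofBounded f) 0 0 f.continuous continuous_const
  have hsnd : π.map Prod.snd = ν := by
    refine ext_of_forall_integral_eq_of_IsFiniteMeasure fun f => ?_
    rw [integral_map measurable_snd.aemeasurable f.continuous.aestronglyMeasurable]
    simpa using key 0 (ofBounded f) 0 continuous_const f.continuous
  refine ⟨π, ⟨?_⟩, hfst, hsnd, fun h => ?_⟩
  · rw [← Set.preimage_univ (f := Prod.fst), ← Measure.map_apply measurable_fst .univ, hfst,
      measure_univ]
  · simpa using key 0 0 h continuous_const continuous_const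

/-- A coupling of measures with finite first moments satisfying the martingale identity against
bounded continuous test functions is a martingale coupling. -/
theorem condExp_snd_ae_eq_fst {π : Measure (E × E)} [IsProbabilityMeasure π]
    (h1 : Integrable (fun p : E × E => p.1) π) (h2 : Integrable (fun p : E × E => p.2) π)
    (hπ : ∀ h : E →ᵇ (E →L[ℝ] ℝ), ∫ p, h p.1 (p.2 - p.1) ∂π = 0) :
    π[(fun p : E × E => p.2) | MeasurableSpace.comap Prod.fst inferInstance]
      =ᵐ[π] (fun p : E × E => p.1) := by
  have : ProperSpace E := FiniteDimensional.proper ℝ E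
  have : CompleteSpace E := FiniteDimensional.complete ℝ E
  set κ := ProbabilityTheory.condDistrib (Prod.snd : E × E → E) Prod.fst π
  have hprod : (π.map Prod.fst) ⊗ₘ κ = π := by
    rw [ProbabilityTheory.compProd_map_condDistrib measurable_snd.aemeasurable]
    exact Measure.map_id
  have : IsProbabilityMeasure (π.map Prod.fst) :=
    Measure.isProbabilityMeasure_map measurable_fst.aemeasurable
  have hid : Integrable (fun x : E => x) (π.map Prod.fst) :=
    (integrable_map_measure aestronglyMeasurable_id measurable_fst.aemeasurable).2 h1
  have hmean : Integrable (fun x => ∫ y, y ∂κ x) (π.map Prod.fst) :=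
    Integrable.integral_condDistrib_map (f := fun p : E × E => p.2)
      measurable_snd.aemeasurable (by simpa using h2)
  have hae : ∀ᵐ x ∂(π.map Prod.fst), ∫ y, y ∂κ x = x := by
    refine ae_eq_of_integral_contDiff_smul_eq hmean.locallyIntegrable hid.locallyIntegrable
      fun g hg hgc => ?_
    obtain ⟨C, hC⟩ := hgc.exists_bound_of_continuous hg.continuous
    have hgm : AEStronglyMeasurable (fun p : E × E => g p.1) π :=
      (hg.continuous.comp continuous_fst).aestronglyMeasurable
    have hg1 : Integrable (fun p : E × E => g p.1 • p.1) π :=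
      h1.bdd_smul C hgm (.of_forall fun p => hC p.1)
    have hg2 : Integrable (fun p : E × E => g p.1 • p.2) π :=
      h2.bdd_smul C hgm (.of_forall fun p => hC p.1)
    have e1 : ∫ x, g x • x ∂(π.map Prod.fst) = ∫ p, g p.1 • p.1 ∂π :=
      integral_map measurable_fst.aemeasurable
        (hg.continuous.smul continuous_id).aestronglyMeasurable
    have e2 : ∫ x, g x • ∫ y, y ∂κ x ∂(π.map Prod.fst) = ∫ p, g p.1 • p.2 ∂π := by
      have hdis := Measure.integral_compProd (μ := π.map Prod.fst) (κ := κ)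
        (f := fun p : E × E => g p.1 • p.2) (by rwa [hprod])
      rw [hprod] at hdis
      rw [hdis]
      exact integral_congr_ae (.of_forall fun x => (integral_smul (g x) _).symm)
    rw [e1, e2, ← sub_eq_zero, ← integral_sub' hg2 hg1]
    refine SeparatingDual.eq_zero_of_forall_dual_eq_zero (R := ℝ) fun l => ?_
    rw [← l.integral_comp_comm (hg2.sub hg1)]
    let h : E →ᵇ (E →L[ℝ] ℝ) := BoundedContinuousFunction.ofNormedAddCommGroup
      (fun x => g x • l) (hg.continuous.smul continuous_const) (C * ‖l‖) fun x => by
        rw [norm_smul]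
        exact mul_le_mul_of_nonneg_right (hC x) (norm_nonneg l)
    rw [← hπ h]
    refine integral_congr_ae (.of_forall fun p => ?_)
    simp [h, ← smul_sub]
  refine (ProbabilityTheory.condExp_ae_eq_integral_condDistrib' measurable_fst h2).trans ?_
  exact ae_of_ae_map measurable_fst.aemeasurable hae

end Coupling

/-- Conditional Jensen: the marginals of a martingale coupling are in convex order. -/
theorem integral_fst_le_integral_snd_of_condExp_eq {E : Type*} [NormedAddCommGroup E]
    [NormedSpace ℝ E] [FiniteDimensional ℝ E] [MeasurableSpace E] {π : Measure (E × E)}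
    [IsProbabilityMeasure π] (h2 : Integrable (fun p : E × E => p.2) π)
    (hπ : π[(fun p : E × E => p.2) | MeasurableSpace.comap Prod.fst inferInstance]
      =ᵐ[π] (fun p : E × E => p.1)) {f : E → ℝ} (hf : ConvexOn ℝ Set.univ f)
    (hf1 : Integrable (fun p : E × E => f p.1) π) (hf2 : Integrable (fun p : E × E => f p.2) π) :
    ∫ p, f p.1 ∂π ≤ ∫ p, f p.2 ∂π := by
  have : CompleteSpace E := FiniteDimensional.complete ℝ E
  have hcont : Continuous f := continuousOn_univ.1 (hf.continuousOn isOpen_univ)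
  have hle : MeasurableSpace.comap (Prod.fst : E × E → E) inferInstance ≤ Prod.instMeasurableSpace :=
    measurable_fst.comap_le
  have hJ := hf.map_condExp_le_univ hle hcont.lowerSemicontinuous h2 hf2
  rw [← integral_condExp hle (f := fun p : E × E => f p.2)]
  refine integral_mono_ae hf1 integrable_condExp ?_
  filter_upwards [hJ, hπ] with p hp hp'
  rw [← hp']
  exact hp

/-- Strassen: For probability measures `μ, ν` on `ℝᵐ` with finite
first moments, there exists a one-step martingale `(X, Y)` with `X ∼ μ`, `Y ∼ ν`
and `E[Y|X] = X` a.s. (formalized via a coupling `π` on `E × E` with the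
conditional expectation of the second coordinate given the first equal a.s. to
the first coordinate) if and only if `μ` is dominated by `ν` in the convex
order. -/
theorem stmt_3 {E : Type*} [NormedAddCommGroup E] [NormedSpace ℝ E]
    [FiniteDimensional ℝ E] [MeasurableSpace E] [BorelSpace E]
    (μ ν : Measure E) [IsProbabilityMeasure μ] [IsProbabilityMeasure ν]
    (hμ1 : Integrable (fun x => ‖x‖) μ) (hν1 : Integrable (fun x => ‖x‖) ν) :
    (∃ π : Measure (E × E), IsProbabilityMeasure π ∧
        π.map Prod.fst = μ ∧ π.map Prod.snd = ν ∧
        π[(fun p : E × E => p.2) | MeasurableSpace.comap Prod.fst inferInstance]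
          =ᵐ[π] (fun p : E × E => p.1)) ↔
      (∀ f : E → ℝ, ConvexOn ℝ Set.univ f → Integrable f μ → Integrable f ν →
        ∫ x, f x ∂μ ≤ ∫ x, f x ∂ν) := by
  have hμid : Integrable (fun x : E => x) μ := (integrable_norm_iff aestronglyMeasurable_id).1 hμ1
  have hνid : Integrable (fun x : E => x) ν := (integrable_norm_iff aestronglyMeasurable_id).1 hν1
  constructor
  · rintro ⟨π, hprob, rfl, rfl, hπ⟩ f hf hfμ hfν
    rw [integral_map measurable_fst.aemeasurable hfμ.1,
      integral_map measurable_snd.aemeasurable hfν.1]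
    exact integral_fst_le_integral_snd_of_condExp_eq (hνid.comp_measurable measurable_snd) hπ hf
      (hfμ.comp_measurable measurable_fst) (hfν.comp_measurable measurable_snd)
  · intro hμν
    obtain ⟨π, hprob, rfl, rfl, hπ⟩ := exists_measure_prod_of_convexOrder hμ1 hν1 hμν
    exact ⟨π, hprob, rfl, rfl, condExp_snd_ae_eq_fst (hμid.comp_measurable measurable_fst)
      (hνid.comp_measurable measurable_snd) hπ⟩
end

section
/- Let ε > 0 and let μ, ν be Borel probability measures on ℝᵐ with finite first moments. Then ∫ f dμ ≤ ∫ f dν + ε for all 1-Lipschitz convex functions f : ℝᵐ → ℝ if and only if there exists a pair of random vectors (X, Y) with law(X) = μ, law(Y) = ν, and E[‖X − E[Y | X]‖] ≤ ε. -/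
open MeasureTheory

open Filter Topology CompactlySupported

section Representation

/-- The functions on `X` bounded by a multiple of the weight `W`. -/
def weightedBounded {X : Type*} (W : X → ℝ) : Submodule ℝ (X → ℝ) where
  carrier := {F | ∃ A, ∀ x, |F x| ≤ A * W x}
  zero_mem' := ⟨0, by simp⟩
  add_mem' := by
    rintro F G ⟨A, hA⟩ ⟨B, hB⟩
    refine ⟨A + B, fun x => ?_⟩
    rw [add_mul]
    exact (abs_add_le _ _).trans (add_le_add (hA x) (hB x))
  smul_mem' := by
    rintro r F ⟨A, hA⟩
    refine ⟨|r| * A, fun x => ?_⟩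
    rw [Pi.smul_apply, smul_eq_mul, abs_mul, mul_assoc]
    exact mul_le_mul_of_nonneg_left (hA x) (abs_nonneg r)

lemma mem_weightedBounded_of_abs_le {X : Type*} {W F G : X → ℝ} (hG : G ∈ weightedBounded W)
    (h : ∀ x, |F x| ≤ |G x|) : F ∈ weightedBounded W := by
  obtain ⟨A, hA⟩ := hG
  exact ⟨A, fun x => (h x).trans (hA x)⟩

variable {X : Type*} [TopologicalSpace X]

lemma mem_weightedBounded_of_hasCompactSupport {W F : X → ℝ} (hW : ∀ x, 1 ≤ W x)
    (hF : Continuous F) (hFc : HasCompactSupport F) : F ∈ weightedBounded W := by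
  obtain ⟨A, hA⟩ := hFc.exists_bound_of_continuous hF
  refine ⟨|A|, fun x => ?_⟩
  exact ((hA x).trans (le_abs_self A)).trans (le_mul_of_one_le_right (abs_nonneg A) (hW x))

/-- A positive functional on functions dominated by `W` that is continuous along some
compactly supported exhaustion of `W` is represented by a measure. -/
theorem exists_measure_of_tight [T2Space X] [LocallyCompactSpace X] [MeasurableSpace X]
    [BorelSpace X] {W : X → ℝ} (hWc : Continuous W) (hW : ∀ x, 1 ≤ W x)
    (Λ : weightedBounded W →ₗ[ℝ] ℝ) (hΛ : ∀ F : weightedBounded W, (∀ x, 0 ≤ F.1 x) → 0 ≤ Λ F)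
    (k : ℕ → weightedBounded W) (hkc : ∀ n, Continuous (k n).1)
    (hks : ∀ n, HasCompactSupport (k n).1) (hk0 : ∀ n x, 0 ≤ (k n).1 x)
    (hkW : ∀ n x, (k n).1 x ≤ W x) (hk : ∀ x, Tendsto (fun n => (k n).1 x) atTop (𝓝 (W x)))
    (W' : weightedBounded W) (hW' : W'.1 = W)
    (hkΛ : Tendsto (fun n => Λ (k n)) atTop (𝓝 (Λ W'))) :
    ∃ π : Measure X, ∀ F : weightedBounded W, Continuous F.1 →
      Integrable F.1 π ∧ ∫ x, F.1 x ∂π = Λ F := by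
  have hW0 : ∀ x, 0 < W x := fun x => zero_lt_one.trans_le (hW x)
  have mono : ∀ F G : weightedBounded W, (∀ x, F.1 x ≤ G.1 x) → Λ F ≤ Λ G := fun F G h => by
    have := hΛ (G - F) fun x => sub_nonneg.2 (h x)
    rwa [map_sub, sub_nonneg] at this
  let ι : C_c(X, ℝ) →ₗ[ℝ] weightedBounded W :=
    { toFun := fun f => ⟨f, mem_weightedBounded_of_hasCompactSupport hW f.continuous
        f.hasCompactSupport⟩
      map_add' := fun _ _ => rfl
      map_smul' := fun _ _ => rfl }
  let Λc : C_c(X, ℝ) →ₚ[ℝ] ℝ := PositiveLinearMap.mk₀ (Λ.comp ι) fun f hf => hΛ _ fun x => hf x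
  set π := RealRMK.rieszMeasure Λc
  have hrep : ∀ F : weightedBounded W, Continuous F.1 → HasCompactSupport F.1 →
      ∫ x, F.1 x ∂π = Λ F := fun F h1 h2 =>
    RealRMK.integral_rieszMeasure Λc ⟨⟨F.1, h1⟩, h2⟩
  have hkint : ∀ n, Integrable (k n).1 π := fun n =>
    (hkc n).integrable_of_hasCompactSupport (hks n)
  have hWint : Integrable W π := by
    refine ⟨hWc.measurable.aestronglyMeasurable, ?_⟩
    have hfatou : ∫⁻ x, ‖W x‖ₑ ∂π ≤ liminf (fun n => ∫⁻ x, ‖(k n).1 x‖ₑ ∂π) atTop := by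
      refine le_trans (le_of_eq (lintegral_congr fun x => ?_))
        (lintegral_liminf_le fun n => (hkc n).measurable.enorm)
      exact ((hk x).enorm.liminf_eq).symm
    have hbd : ∀ n, ∫⁻ x, ‖(k n).1 x‖ₑ ∂π ≤ ENNReal.ofReal (Λ W') := fun n => by
      rw [← ofReal_integral_norm_eq_lintegral_enorm (hkint n)]
      refine ENNReal.ofReal_le_ofReal ?_
      simp only [Real.norm_of_nonneg (hk0 n _)]
      rw [hrep _ (hkc n) (hks n)]
      exact mono _ _ fun x => by rw [hW']; exact hkW n x
    refine (hfatou.trans ?_).trans_lt (ENNReal.ofReal_lt_top (r := Λ W'))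
    exact (liminf_le_liminf (Eventually.of_forall hbd)).trans (by simp)
  refine ⟨π, fun F hF => ?_⟩
  obtain ⟨A, hA⟩ := F.2
  have hFint : Integrable F.1 π :=
    (hWint.const_mul A).mono' hF.measurable.aestronglyMeasurable (ae_of_all _ hA)
  refine ⟨hFint, ?_⟩
  let q : ℕ → X → ℝ := fun n x => F.1 x * ((k n).1 x / W x)
  have hq01 : ∀ n x, 0 ≤ (k n).1 x / W x ∧ (k n).1 x / W x ≤ 1 := fun n x =>
    ⟨div_nonneg (hk0 n x) (hW0 x).le, (div_le_one (hW0 x)).2 (hkW n x)⟩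
  have hqF : ∀ n x, |q n x| ≤ |F.1 x| := fun n x => by
    rw [abs_mul, abs_of_nonneg (hq01 n x).1]
    exact mul_le_of_le_one_right (abs_nonneg _) (hq01 n x).2
  have hqc : ∀ n, Continuous (q n) := fun n => hF.mul ((hkc n).div₀ hWc fun x => (hW0 x).ne')
  have hqs : ∀ n, HasCompactSupport (q n) := fun n =>
    (hks n).mono fun x hx => by
      contrapose! hx
      simp [q, Function.notMem_support.1 hx]
  let Q : ℕ → weightedBounded W := fun n => ⟨q n, mem_weightedBounded_of_abs_le F.2 (hqF n)⟩
  have hdiff : ∀ n x, |F.1 x - q n x| ≤ A * (W x - (k n).1 x) := fun n x => by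
    have h1 : F.1 x - q n x = F.1 x * ((W x - (k n).1 x) / W x) := by
      simp only [q]
      field_simp [(hW0 x).ne']
    have h2 : 0 ≤ (W x - (k n).1 x) / W x :=
      div_nonneg (sub_nonneg.2 (hkW n x)) (hW0 x).le
    rw [h1, abs_mul, abs_of_nonneg h2]
    calc _ ≤ A * W x * ((W x - (k n).1 x) / W x) := mul_le_mul_of_nonneg_right (hA x) h2
      _ = _ := by field_simp [(hW0 x).ne']
  have hΛQ : Tendsto (fun n => Λ (Q n)) atTop (𝓝 (Λ F)) := by
    have hb : Tendsto (fun n => A * (Λ W' - Λ (k n))) atTop (𝓝 0) := by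
      simpa using (hkΛ.const_sub (Λ W')).const_mul A
    refine tendsto_iff_norm_sub_tendsto_zero.2 (squeeze_zero (fun _ => norm_nonneg _)
      (fun n => ?_) hb)
    have e : A * (Λ W' - Λ (k n)) = Λ (A • (W' - k n)) := by simp
    rw [Real.norm_eq_abs, abs_le, e, ← map_neg, ← map_sub]
    constructor <;> refine mono _ _ fun x => ?_
    · have := (abs_le.1 (hdiff n x)).2
      simp only [Submodule.coe_neg, Submodule.coe_smul, Submodule.coe_sub, Pi.neg_apply,
        Pi.smul_apply, Pi.sub_apply, smul_eq_mul, hW', Q]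
      linarith
    · have := (abs_le.1 (hdiff n x)).1
      simp only [Submodule.coe_smul, Submodule.coe_sub,
        Pi.smul_apply, Pi.sub_apply, smul_eq_mul, hW', Q]
      linarith
  have hint : Tendsto (fun n => ∫ x, q n x ∂π) atTop (𝓝 (∫ x, F.1 x ∂π)) := by
    refine tendsto_integral_of_dominated_convergence (fun x => |F.1 x|)
      (fun n => (hqc n).measurable.aestronglyMeasurable) hFint.abs
      (fun n => ae_of_all _ (hqF n)) (ae_of_all _ fun x => ?_)
    have := ((hk x).div_const (W x)).const_mul (F.1 x)
    rwa [div_self (hW0 x).ne', mul_one] at this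
  refine tendsto_nhds_unique hint (hΛQ.congr fun n => ?_)
  exact (hrep (Q n) (hqc n) (hqs n)).symm

end Representation

section Duality

lemma LipschitzWith.integrable_comp {Ω E : Type*} [MeasurableSpace Ω] [NormedAddCommGroup E]
    {ρ : Measure Ω} [IsFiniteMeasure ρ] {f : E → ℝ} {c : NNReal} (hf : LipschitzWith c f)
    {U : Ω → E} (hU : Integrable U ρ) : Integrable (fun ω => f (U ω)) ρ := by
  refine Integrable.mono' ((integrable_const |f 0|).add (hU.norm.const_mul c))
    (hf.continuous.comp_aestronglyMeasurable hU.aestronglyMeasurable) (ae_of_all _ fun ω => ?_)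
  have h1 := hf.dist_le_mul (U ω) 0
  rw [Real.dist_eq, dist_zero_right] at h1
  have h2 : |f (U ω)| ≤ |f (U ω) - f 0| + |f 0| := by
    simpa using abs_add_le (f (U ω) - f 0) (f 0)
  simp only [Pi.add_apply, Real.norm_eq_abs]
  linarith

variable {E : Type*} [NormedAddCommGroup E] [NormedSpace ℝ E]

/-- A pointwise bounded above supremum of affine functions is convex. -/
lemma convexOn_iSup_affine (φ : E → ℝ) (h : E → E →L[ℝ] ℝ)
    (hb : ∀ y, BddAbove (Set.range fun x => h x (y - x) - φ x)) :
    ConvexOn ℝ Set.univ (fun y => ⨆ x, (h x (y - x) - φ x)) := by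
  refine ⟨convex_univ, fun y _ z _ a b ha hb' hab => ciSup_le fun x => ?_⟩
  have hy := le_ciSup (hb y) x
  have hz := le_ciSup (hb z) x
  have key : h x (a • y + b • z - x) - φ x
      = a * (h x (y - x) - φ x) + b * (h x (z - x) - φ x) := by
    obtain rfl : b = 1 - a := by linarith
    simp only [map_sub, map_add, map_smul, smul_eq_mul]
    ring
  simp only [smul_eq_mul]
  rw [key]
  gcongr

/-- A pointwise bounded above supremum of affine functions with slopes bounded by `c` is
`c`-Lipschitz. -/
lemma lipschitzWith_iSup_affine (φ : E → ℝ) (h : E → E →L[ℝ] ℝ) (c : NNReal)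
    (hc : ∀ x, ‖h x‖ ≤ c) (hb : ∀ y, BddAbove (Set.range fun x => h x (y - x) - φ x)) :
    LipschitzWith c (fun y => ⨆ x, (h x (y - x) - φ x)) := by
  refine LipschitzWith.of_le_add_mul c fun y z => ciSup_le fun x => ?_
  have hz := le_ciSup (hb z) x
  have hyz : h x (y - z) ≤ c * ‖y - z‖ :=
    (le_abs_self _).trans ((h x).le_of_opNorm_le (hc x) _)
  have key : h x (y - x) = h x (z - x) + h x (y - z) := by
    rw [← map_add]
    congr 1
    abel
  rw [dist_eq_norm, key]
  linarith

variable [SecondCountableTopology E] [MeasurableSpace E] [BorelSpace E] {μ ν : Measure E}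
  [IsProbabilityMeasure μ] [IsProbabilityMeasure ν] {ε : ℝ}

/-- Weak duality: the domination hypothesis for convex `1`-Lipschitz functions bounds from below
the dual cost of `φ ⊕ ψ + ⟨h, x - y⟩ ≥ 0`. -/
lemma integral_add_integral_add_nonneg
    (hμ1 : Integrable (fun x => ‖x‖) μ) (hν1 : Integrable (fun x => ‖x‖) ν)
    (H : ∀ f : E → ℝ, ConvexOn ℝ Set.univ f → LipschitzWith 1 f →
        ∫ x, f x ∂μ ≤ ∫ x, f x ∂ν + ε)
    {φ ψ : E → ℝ} (hφ : Integrable φ μ) (hψ : Integrable ψ ν) {h : E → E →L[ℝ] ℝ} {c : ℝ}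
    (hc0 : 0 ≤ c) (hc : ∀ x, ‖h x‖ ≤ c) (hnn : ∀ x y, 0 ≤ φ x + ψ y + h x (x - y)) :
    0 ≤ ∫ x, φ x ∂μ + ∫ y, ψ y ∂ν + c * ε := by
  have hpos : ∀ d : NNReal, c < d → 0 ≤ ∫ x, φ x ∂μ + ∫ y, ψ y ∂ν + d * ε := by
    intro d hd
    have hd0 : (0 : ℝ) < d := hc0.trans_lt hd
    have hle : ∀ y x, h x (y - x) - φ x ≤ ψ y := fun y x => by
      have h1 := hnn x y
      rw [← neg_sub y x, map_neg] at h1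
      linarith
    have hb : ∀ y, BddAbove (Set.range fun x => h x (y - x) - φ x) := fun y =>
      ⟨ψ y, by rintro _ ⟨x, rfl⟩; exact hle y x⟩
    set f : E → ℝ := fun y => ⨆ x, (h x (y - x) - φ x) with hf
    have hfc := convexOn_iSup_affine φ h hb
    have hfl := lipschitzWith_iSup_affine φ h d (fun x => (hc x).trans hd.le) hb
    rw [← hf] at hfc hfl
    have hlip : LipschitzWith 1 (fun y => (d : ℝ)⁻¹ * f y) := by
      refine LipschitzWith.of_dist_le_mul fun y z => ?_
      have h1 := hfl.dist_le_mul y z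
      rw [Real.dist_eq] at h1 ⊢
      rw [← mul_sub, abs_mul, abs_of_pos (inv_pos.2 hd0), inv_mul_le_iff₀ hd0]
      simpa using h1
    have h1 := H _ (by simpa [smul_eq_mul] using hfc.smul (inv_nonneg.2 hd0.le)) hlip
    rw [integral_const_mul, integral_const_mul] at h1
    have h2 : ∫ x, f x ∂μ ≤ ∫ x, f x ∂ν + d * ε := by
      have := mul_le_mul_of_nonneg_left h1 hd0.le
      rwa [mul_add, mul_inv_cancel_left₀ hd0.ne', mul_inv_cancel_left₀ hd0.ne'] at this
    have hfint : ∀ {ρ : Measure E} [IsProbabilityMeasure ρ], Integrable (fun x => ‖x‖) ρ →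
        Integrable f ρ := fun hρ =>
      hfl.integrable_comp (U := id) ((integrable_norm_iff aestronglyMeasurable_id).1 hρ)
    have hfν : ∫ y, f y ∂ν ≤ ∫ y, ψ y ∂ν :=
      integral_mono (hfint hν1) hψ fun y => ciSup_le (hle y)
    have hfμ : ∫ x, -φ x ∂μ ≤ ∫ x, f x ∂μ :=
      integral_mono hφ.neg (hfint hμ1) fun x => by
        simpa [hf] using le_ciSup (hb x) x
    rw [integral_neg] at hfμ
    linarith
  have hlim : Tendsto (fun d : ℝ => ∫ x, φ x ∂μ + ∫ y, ψ y ∂ν + d * ε) (𝓝[>] c)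
      (𝓝 (∫ x, φ x ∂μ + ∫ y, ψ y ∂ν + c * ε)) :=
    ((by fun_prop : Continuous fun d : ℝ => ∫ x, φ x ∂μ + ∫ y, ψ y ∂ν + d * ε).tendsto c).mono_left
      nhdsWithin_le_nhds
  refine ge_of_tendsto hlim ?_
  filter_upwards [self_mem_nhdsWithin] with d hd
  exact hpos ⟨d, hc0.trans (Set.mem_Ioi.1 hd).le⟩ hd


/-- Strong duality: a functional that is dual to the cone of nonnegative functions of the form
`F + φ ⊕ ψ + ⟨h, x - y⟩`. -/
theorem exists_dual_functional
    (hμ1 : Integrable (fun x => ‖x‖) μ) (hν1 : Integrable (fun x => ‖x‖) ν)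
    (H : ∀ f : E → ℝ, ConvexOn ℝ Set.univ f → LipschitzWith 1 f →
        ∫ x, f x ∂μ ≤ ∫ x, f x ∂ν + ε) :
    ∃ Λ : weightedBounded (fun p : E × E => 1 + ‖p.1‖ + ‖p.2‖) →ₗ[ℝ] ℝ,
      ∀ (F : weightedBounded (fun p : E × E => 1 + ‖p.1‖ + ‖p.2‖)) (φ ψ : E → ℝ)
        (h : E → E →L[ℝ] ℝ) (c : ℝ), Integrable φ μ → Integrable ψ ν → 0 ≤ c → (∀ x, ‖h x‖ ≤ c) →
        (∀ x y, 0 ≤ F.1 (x, y) + φ x + ψ y + h x (x - y)) →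
        0 ≤ Λ F + ∫ x, φ x ∂μ + ∫ y, ψ y ∂ν + c * ε := by
  let V := weightedBounded (fun p : E × E => 1 + ‖p.1‖ + ‖p.2‖)
  let s : PointedCone ℝ (V × ℝ) :=
    { carrier := {z | ∃ (φ ψ : E → ℝ) (h : E → E →L[ℝ] ℝ) (c : ℝ), Integrable φ μ ∧
        Integrable ψ ν ∧ 0 ≤ c ∧ (∀ x, ‖h x‖ ≤ c) ∧
        (∀ x y, 0 ≤ z.1.1 (x, y) + φ x + ψ y + h x (x - y)) ∧
        ∫ x, φ x ∂μ + ∫ y, ψ y ∂ν + c * ε ≤ z.2}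
      zero_mem' := ⟨0, 0, 0, 0, integrable_zero _ _ _, integrable_zero _ _ _, le_rfl,
        by simp, by simp, by simp⟩
      add_mem' := by
        rintro z w ⟨φ, ψ, h, c, hφ, hψ, hc0, hc, hz, hzt⟩ ⟨φ', ψ', h', c', hφ', hψ', hc0', hc', hw,
          hwt⟩
        refine ⟨φ + φ', ψ + ψ', h + h', c + c', hφ.add hφ', hψ.add hψ', add_nonneg hc0 hc0',
          fun x => (norm_add_le _ _).trans (add_le_add (hc x) (hc' x)), fun x y => ?_, ?_⟩
        · have h1 := hz x y
          have h2 := hw x y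
          simp only [Prod.fst_add, Submodule.coe_add, Pi.add_apply, add_apply]
          linarith
        · simp only [Pi.add_apply, Prod.snd_add]
          rw [integral_add hφ hφ', integral_add hψ hψ']
          linarith
      smul_mem' := by
        rintro ⟨r, hr⟩ z ⟨φ, ψ, h, c, hφ, hψ, hc0, hc, hz, hzt⟩
        refine ⟨r • φ, r • ψ, r • h, r * c, hφ.smul r, hψ.smul r, mul_nonneg hr hc0,
          fun x => ?_, fun x y => ?_, ?_⟩
        · rw [Pi.smul_apply, norm_smul, Real.norm_of_nonneg hr]
          exact mul_le_mul_of_nonneg_left (hc x) hr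
        · have h1 := mul_nonneg hr (hz x y)
          change 0 ≤ r * z.1.1 (x, y) + r * φ x + r * ψ y + r * h x (x - y)
          linarith
        · have h1 := mul_le_mul_of_nonneg_left hzt hr
          simp only [Pi.smul_apply, smul_eq_mul]
          rw [integral_const_mul, integral_const_mul]
          change _ ≤ r * z.2
          linarith }
  let f : V × ℝ →ₗ.[ℝ] ℝ :=
    ⟨LinearMap.range (LinearMap.inr ℝ V ℝ), (LinearMap.snd ℝ V ℝ).comp (Submodule.subtype _)⟩
  obtain ⟨g, hgf, hgs⟩ := riesz_extension s f (by
    rintro ⟨_, t, rfl⟩ ⟨φ, ψ, h, c, hφ, hψ, hc0, hc, hz, hzt⟩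
    refine le_trans ?_ hzt
    exact integral_add_integral_add_nonneg hμ1 hν1 H hφ hψ hc0 hc
      fun x y => by simpa using hz x y) (by
    rintro ⟨F, t⟩
    obtain ⟨A, hA⟩ := F.2
    refine ⟨⟨_, ∫ x, A * (1 + ‖x‖) ∂μ + ∫ y, A * ‖y‖ ∂ν - t, rfl⟩, fun x => A * (1 + ‖x‖),
      fun y => A * ‖y‖, 0, 0, ((integrable_const 1).add hμ1).const_mul A, hν1.const_mul A, le_rfl,
      by simp, fun x y => ?_, by simp⟩
    have h1 := (abs_le.1 (hA (x, y))).1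
    simp only [LinearMap.inr_apply, Prod.mk_add_mk, zero_add, Pi.zero_apply,
      zero_apply] at h1 ⊢
    linarith)
  refine ⟨g.comp (LinearMap.inl ℝ V ℝ), fun F φ ψ h c hφ hψ hc0 hc hF => ?_⟩
  set t := ∫ x, φ x ∂μ + ∫ y, ψ y ∂ν + c * ε with ht
  have h1 := hgs (F, t) ⟨φ, ψ, h, c, hφ, hψ, hc0, hc, hF, ht.ge⟩
  have h2 : g (0, t) = t := hgf ⟨(0, t), t, rfl⟩
  have h3 : g (F, t) = g (F, 0) + g (0, t) := by rw [← map_add]; simp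
  rw [LinearMap.comp_apply, LinearMap.inl_apply]
  linarith

end Duality

section Norming

variable {E : Type*} [NormedAddCommGroup E] [NormedSpace ℝ E]

/-- A continuous choice of almost norming functionals. -/
lemma exists_continuous_almost_norming {δ : ℝ} (hδ : 0 < δ) :
    ∃ J : C(E, E →L[ℝ] ℝ), ∀ v, ‖J v‖ ≤ 1 ∧ ‖v‖ - δ < J v v := by
  refine exists_continuous_forall_mem_convex_of_local_const
    (t := fun v => {l : E →L[ℝ] ℝ | ‖l‖ ≤ 1 ∧ ‖v‖ - δ < l v}) (fun v => ?_) fun v => ?_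
  · rintro l ⟨hl, hlv⟩ m ⟨hm, hmv⟩ a b ha hb hab
    constructor
    · exact mem_closedBall_zero_iff.1 (convex_closedBall (0 : E →L[ℝ] ℝ) 1
        (mem_closedBall_zero_iff.2 hl) (mem_closedBall_zero_iff.2 hm) ha hb hab)
    · exact convex_Ioi (𝕜 := ℝ) (‖v‖ - δ) hlv hmv ha hb hab
  · obtain ⟨l, hl, hlv⟩ := exists_dual_vector'' ℝ v
    refine ⟨l, ?_⟩
    have hev : ∀ᶠ w in 𝓝 v, ‖w‖ - δ < l w := by
      refine (isOpen_lt (by fun_prop) (by fun_prop)).mem_nhds ?_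
      change ‖v‖ - δ < l v
      rw [hlv]
      simpa using hδ
    filter_upwards [hev] with w hw using ⟨hl, hw⟩

/-- The `L¹` norm of a vector valued function is determined by continuous test functions with
values in the dual unit ball. -/
lemma integral_norm_le_of_forall_continuous [MeasurableSpace E] [BorelSpace E]
    {μ : Measure E} [IsProbabilityMeasure μ] {D : E → E} (hD : Integrable D μ) {ε : ℝ}
    (H : ∀ h : E → E →L[ℝ] ℝ, Continuous h → (∀ x, ‖h x‖ ≤ 1) →
      Integrable (fun x => h x (D x)) μ ∧ ∫ x, h x (D x) ∂μ ≤ ε) :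
    ∫ x, ‖D x‖ ∂μ ≤ ε := by
  refine le_of_forall_pos_le_add fun δ hδ => ?_
  obtain ⟨D', hD', hD'int⟩ := hD.exists_boundedContinuous_integral_sub_le (by positivity : 0 < δ / 3)
  obtain ⟨J, hJ⟩ := exists_continuous_almost_norming (E := E) (by positivity : 0 < δ / 3)
  obtain ⟨hint, hle⟩ := H (fun x => J (D' x)) (by fun_prop) fun x => (hJ _).1
  have hdiff : Integrable (fun x => ‖D x - D' x‖) μ := (hD.sub hD'int).norm
  have hmono : ∫ x, ‖D x‖ ∂μ
      ≤ ∫ x, (J (D' x) (D x) + (2 * ‖D x - D' x‖ + δ / 3)) ∂μ := by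
    refine integral_mono hD.norm (hint.add ((hdiff.const_mul 2).add (integrable_const _)))
      fun x => ?_
    have h1 := (hJ (D' x)).2
    have h2 : J (D' x) (D' x) - J (D' x) (D x) ≤ ‖D x - D' x‖ := by
      rw [← map_sub, ← norm_neg (D x - D' x), neg_sub, ← one_mul ‖D' x - D x‖]
      exact (le_abs_self _).trans ((J (D' x)).le_of_opNorm_le (hJ _).1 _)
    have h3 : ‖D x‖ ≤ ‖D' x‖ + ‖D x - D' x‖ := by
      simpa using norm_add_le (D' x) (D x - D' x)
    simp only
    linarith
  rw [integral_add hint (by fun_prop),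
    integral_add (hdiff.const_mul 2) (integrable_const _), integral_const_mul] at hmono
  simp only [integral_const, probReal_univ, one_smul] at hmono
  linarith

end Norming

section Coupling

lemma tendsto_integral_max_norm_sub {E : Type*} [NormedAddCommGroup E] [MeasurableSpace E]
    [BorelSpace E] {ρ : Measure E} (hρ : Integrable (fun x => ‖x‖) ρ) :
    Tendsto (fun n : ℕ => ∫ x, max (‖x‖ - n) 0 ∂ρ) atTop (𝓝 0) := by
  have hzero : ∫ _ : E, (0 : ℝ) ∂ρ = 0 := integral_zero E ℝ
  nth_rw 2 [← hzero]
  refine tendsto_integral_of_dominated_convergence (fun x => ‖x‖)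
    (fun n => (by fun_prop : Continuous fun x : E =>
      max (‖x‖ - n) 0).measurable.aestronglyMeasurable) hρ
    (fun n => ae_of_all _ fun x => ?_) (ae_of_all _ fun x => ?_)
  · rw [Real.norm_of_nonneg (le_max_right _ _)]
    exact max_le (sub_le_self _ (Nat.cast_nonneg n)) (norm_nonneg x)
  · refine tendsto_const_nhds.congr' ?_
    filter_upwards [eventually_ge_atTop ⌈‖x‖⌉₊] with n hn
    rw [max_eq_right (sub_nonpos.2 (Nat.ceil_le.1 hn))]

variable {E : Type*} [NormedAddCommGroup E] [NormedSpace ℝ E] [FiniteDimensional ℝ E]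
  [MeasurableSpace E] [BorelSpace E] {μ ν : Measure E} [IsProbabilityMeasure μ]
  [IsProbabilityMeasure ν] {ε : ℝ}

/-- A coupling whose conditional displacement is bounded against all continuous test functions. -/
theorem exists_coupling_of_convex_dominated
    (hμ1 : Integrable (fun x => ‖x‖) μ) (hν1 : Integrable (fun x => ‖x‖) ν)
    (H : ∀ f : E → ℝ, ConvexOn ℝ Set.univ f → LipschitzWith 1 f →
        ∫ x, f x ∂μ ≤ ∫ x, f x ∂ν + ε) :
    ∃ π : Measure (E × E), IsProbabilityMeasure π ∧ π.map Prod.fst = μ ∧ π.map Prod.snd = ν ∧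
      ∀ h : E → E →L[ℝ] ℝ, Continuous h → (∀ x, ‖h x‖ ≤ 1) →
        ∫ p, h p.1 (p.1 - p.2) ∂π ≤ ε := by
  obtain ⟨Λ, hΛ⟩ := exists_dual_functional hμ1 hν1 H
  let W : E × E → ℝ := fun p => 1 + ‖p.1‖ + ‖p.2‖
  have hWc : Continuous W := by fun_prop
  have hW : ∀ p, 1 ≤ W p := fun p => by
    have := norm_nonneg p.1
    have := norm_nonneg p.2
    simp only [W]
    linarith
  have hmem : ∀ {F : E × E → ℝ} (A : ℝ), (∀ p, |F p| ≤ A * W p) → F ∈ weightedBounded W :=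
    fun A hA => ⟨A, hA⟩
  have hpos : ∀ F : weightedBounded W, (∀ x, 0 ≤ F.1 x) → 0 ≤ Λ F := fun F hF => by
    simpa using hΛ F 0 0 0 0 (integrable_zero _ _ _) (integrable_zero _ _ _) le_rfl (by simp)
      fun x y => by simpa using hF (x, y)
  have hsum : ∀ (F : weightedBounded W) (φ ψ : E → ℝ), Integrable φ μ → Integrable ψ ν →
      (∀ x y, F.1 (x, y) = φ x + ψ y) → Λ F = ∫ x, φ x ∂μ + ∫ y, ψ y ∂ν := by
    intro F φ ψ hφ hψ hF
    have h1 := hΛ F (-φ) (-ψ) 0 0 hφ.neg hψ.neg le_rfl (by simp) fun x y => by simp [hF]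
    have h2 := hΛ (-F) φ ψ 0 0 hφ hψ le_rfl (by simp) fun x y => by simp [hF]
    simp only [Pi.neg_apply, integral_neg, map_neg] at h1 h2
    linarith
  let tail : ℕ → E × E → ℝ := fun n p => 2 * max (‖p.1‖ - n) 0 + 2 * max (‖p.2‖ - n) 0
  have htail0 : ∀ n p, 0 ≤ tail n p := fun n p => by positivity
  have htail : ∀ n, tail n ∈ weightedBounded W := fun n => hmem 2 fun p => by
    rw [abs_of_nonneg (htail0 n p)]
    have h1 : max (‖p.1‖ - n) 0 ≤ ‖p.1‖ :=
      max_le (sub_le_self _ (Nat.cast_nonneg n)) (norm_nonneg _)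
    have h2 : max (‖p.2‖ - n) 0 ≤ ‖p.2‖ :=
      max_le (sub_le_self _ (Nat.cast_nonneg n)) (norm_nonneg _)
    simp only [tail, W]
    linarith
  let k : ℕ → E × E → ℝ := fun n p => max (W p - tail n p) 0
  have hkc : ∀ n, Continuous (k n) := fun n => by fun_prop
  have hk0 : ∀ n p, 0 ≤ k n p := fun n p => le_max_right _ _
  have hkW : ∀ n p, k n p ≤ W p := fun n p =>
    max_le (sub_le_self _ (htail0 n p)) (zero_le_one.trans (hW p))
  have hks : ∀ n, HasCompactSupport (k n) := fun n => by
    refine HasCompactSupport.intro (isCompact_closedBall (0 : E × E) (1 + 4 * n)) fun p hp => ?_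
    refine max_eq_right (sub_nonpos.2 ?_)
    rw [mem_closedBall_zero_iff, Prod.norm_def, not_le, lt_max_iff] at hp
    have h1 := le_max_left (‖p.1‖ - n) 0
    have h2 := le_max_left (‖p.2‖ - n) 0
    have h3 := le_max_right (‖p.1‖ - n) 0
    have h4 := le_max_right (‖p.2‖ - n) 0
    simp only [W, tail]
    rcases hp with hp | hp <;> rcases le_total ‖p.1‖ n with h5 | h5 <;>
      rcases le_total ‖p.2‖ n with h6 | h6 <;> linarith
  let K : ℕ → weightedBounded W := fun n => ⟨k n, hmem 1 fun p => by
    rw [abs_of_nonneg (hk0 n p), one_mul]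
    exact hkW n p⟩
  let W' : weightedBounded W := ⟨W, hmem 1 fun p => by
    rw [abs_of_nonneg (zero_le_one.trans (hW p)), one_mul]⟩
  have hmaxint : ∀ (ρ : Measure E), Integrable (fun x => ‖x‖) ρ → ∀ n : ℕ,
      Integrable (fun x => 2 * max (‖x‖ - n) 0) ρ := fun ρ hρ n => by
    refine Integrable.const_mul (hρ.mono' (by fun_prop : Continuous fun x : E =>
      max (‖x‖ - n) 0).measurable.aestronglyMeasurable (ae_of_all _ fun x => ?_)) 2
    rw [Real.norm_of_nonneg (le_max_right _ _)]
    exact max_le (sub_le_self _ (Nat.cast_nonneg n)) (norm_nonneg x)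
  have hkΛ : Tendsto (fun n => Λ (K n)) atTop (𝓝 (Λ W')) := by
    have hlim : Tendsto (fun n : ℕ => Λ W' - Λ ⟨tail n, htail n⟩) atTop (𝓝 (Λ W')) := by
      have h1 := ((tendsto_integral_max_norm_sub hμ1).const_mul 2).add
        ((tendsto_integral_max_norm_sub hν1).const_mul 2)
      simp only [← integral_const_mul, mul_zero, add_zero] at h1
      have h2 := h1.const_sub (Λ W')
      rw [sub_zero] at h2
      refine h2.congr fun n => ?_
      rw [hsum ⟨tail n, htail n⟩ _ _ (hmaxint μ hμ1 n) (hmaxint ν hν1 n) fun x y => rfl]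
    refine tendsto_of_tendsto_of_tendsto_of_le_of_le hlim tendsto_const_nhds
      (fun n => ?_) (fun n => ?_)
    · have := hpos (K n - (W' - ⟨tail n, htail n⟩)) fun p =>
        sub_nonneg.2 (le_max_left _ _)
      rw [map_sub, map_sub] at this
      exact sub_nonneg.1 this
    · have := hpos (W' - K n) fun p => sub_nonneg.2 (hkW n p)
      rw [map_sub] at this
      exact sub_nonneg.1 this
  have hk : ∀ p, Tendsto (fun n => k n p) atTop (𝓝 (W p)) := fun p => by
    refine tendsto_const_nhds.congr' ?_
    filter_upwards [eventually_ge_atTop ⌈‖p.1‖⌉₊, eventually_ge_atTop ⌈‖p.2‖⌉₊] with n h1 h2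
    have h3 : tail n p = 0 := by
      simp only [tail]
      rw [max_eq_right (sub_nonpos.2 (Nat.ceil_le.1 h1)),
        max_eq_right (sub_nonpos.2 (Nat.ceil_le.1 h2))]
      simp
    simp only [k]
    rw [h3, sub_zero, max_eq_left (zero_le_one.trans (hW p))]
  obtain ⟨π, hπ⟩ := exists_measure_of_tight hWc hW Λ hpos K hkc hks hk0 hkW hk W' rfl hkΛ
  have hprob : IsProbabilityMeasure π := by
    have hone := hπ ⟨fun _ => 1, hmem 1 fun p => by simpa using hW p⟩ continuous_const
    have hfin : IsFiniteMeasure π :=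
      (integrable_const_iff_isFiniteMeasure one_ne_zero).1 hone.1
    have h1 := hone.2
    rw [hsum _ (fun _ => 1) (fun _ => 0) (integrable_const _) (integrable_const _)
      fun x y => by simp] at h1
    refine ⟨?_⟩
    rw [← ENNReal.toReal_eq_one_iff]
    simpa [Measure.real] using h1
  have hbdd : ∀ (f : BoundedContinuousFunction E ℝ) (p : E × E) (x : E), |f x| ≤ ‖f‖ * W p :=
    fun f p x => (f.norm_coe_le_norm x).trans (le_mul_of_one_le_right (norm_nonneg f) (hW p))
  refine ⟨π, hprob, ?_, ?_, fun h hh hh1 => ?_⟩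
  · have := Measure.isProbabilityMeasure_map (μ := π) (measurable_fst (α := E) (β := E)).aemeasurable
    refine ext_of_forall_integral_eq_of_IsFiniteMeasure fun f => ?_
    rw [integral_map measurable_fst.aemeasurable f.continuous.measurable.aestronglyMeasurable,
      (hπ ⟨fun p => f p.1, hmem ‖f‖ fun p => hbdd f p p.1⟩ (by fun_prop)).2,
      hsum _ f 0 (f.integrable μ) (integrable_zero _ _ _) fun x y => by simp]
    simp
  · have := Measure.isProbabilityMeasure_map (μ := π) (measurable_snd (α := E) (β := E)).aemeasurable
    refine ext_of_forall_integral_eq_of_IsFiniteMeasure fun f => ?_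
    rw [integral_map measurable_snd.aemeasurable f.continuous.measurable.aestronglyMeasurable,
      (hπ ⟨fun p => f p.2, hmem ‖f‖ fun p => hbdd f p p.2⟩ (by fun_prop)).2,
      hsum _ 0 f (integrable_zero _ _ _) (f.integrable ν) fun x y => by simp]
    simp
  · let F : weightedBounded W := ⟨fun p => h p.1 (p.1 - p.2), hmem 1 fun p => by
      have h1 := (h p.1).le_of_opNorm_le (hh1 p.1) (p.1 - p.2)
      have h2 := norm_sub_le p.1 p.2
      rw [Real.norm_eq_abs] at h1
      simp only [W]
      linarith⟩
    have hFc : Continuous F.1 := (hh.comp continuous_fst).clm_apply (by fun_prop)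
    have h1 := hΛ (-F) 0 0 h 1 (integrable_zero _ _ _) (integrable_zero _ _ _) zero_le_one hh1
      fun x y => by simp [F]
    rw [map_neg, ← (hπ F hFc).2] at h1
    simp only [Pi.zero_apply, integral_zero] at h1
    linarith

end Coupling

/-- approximate Strassen: For `ε > 0` and probability measures
`μ, ν` on `ℝᵐ` with finite first moments, `∫ f dμ ≤ ∫ f dν + ε` holds for all
1-Lipschitz convex `f` if and only if there is a coupling `(X,Y)` with laws
`μ, ν` such that `E[‖X - E[Y|X]‖] ≤ ε`. -/
theorem stmt_4 {E : Type*} [NormedAddCommGroup E] [NormedSpace ℝ E]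
    [FiniteDimensional ℝ E] [MeasurableSpace E] [BorelSpace E]
    (μ ν : Measure E) [IsProbabilityMeasure μ] [IsProbabilityMeasure ν]
    (hμ1 : Integrable (fun x => ‖x‖) μ) (hν1 : Integrable (fun x => ‖x‖) ν)
    (ε : ℝ) (hε : 0 < ε) :
    (∀ f : E → ℝ, ConvexOn ℝ Set.univ f → LipschitzWith 1 f →
        ∫ x, f x ∂μ ≤ ∫ x, f x ∂ν + ε) ↔
      (∃ π : Measure (E × E), IsProbabilityMeasure π ∧
        π.map Prod.fst = μ ∧ π.map Prod.snd = ν ∧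
        ∫ p, ‖p.1 -
            (π[(fun q : E × E => q.2) |
              MeasurableSpace.comap Prod.fst inferInstance]) p‖ ∂π ≤ ε) := by
  have hm : MeasurableSpace.comap (Prod.fst : E × E → E) inferInstance
      ≤ (inferInstance : MeasurableSpace (E × E)) := measurable_fst.comap_le
  have hfst : ∀ π : Measure (E × E), π.map Prod.fst = μ → Integrable (fun p : E × E => p.1) π := by
    rintro π rfl
    exact ((integrable_norm_iff aestronglyMeasurable_id).1 hμ1).comp_measurable measurable_fst
  have hsnd : ∀ π : Measure (E × E), π.map Prod.snd = ν → Integrable (fun p : E × E => p.2) π := by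
    rintro π rfl
    exact ((integrable_norm_iff aestronglyMeasurable_id).1 hν1).comp_measurable measurable_snd
  constructor
  · intro H
    obtain ⟨π, hπ, h1, h2, hle⟩ := exists_coupling_of_convex_dominated hμ1 hν1 H
    refine ⟨π, hπ, h1, h2, ?_⟩
    have hX := hfst π h1
    have hY := hsnd π h2
    set Z := π[(fun q : E × E => q.2) | MeasurableSpace.comap Prod.fst inferInstance] with hZ
    have hZint : Integrable Z π := integrable_condExp
    obtain ⟨g, hg, hgZ⟩ := (stronglyMeasurable_condExp (μ := π) (f := fun q : E × E => q.2)
      (m := MeasurableSpace.comap Prod.fst inferInstance)).exists_eq_measurable_comp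
    rw [← hZ] at hgZ
    have hDm : AEStronglyMeasurable (fun x => x - g x) μ :=
      aestronglyMeasurable_id.sub hg.aestronglyMeasurable
    have hDint : Integrable (fun x => x - g x) μ := by
      rw [← h1] at hDm ⊢
      rw [integrable_map_measure hDm measurable_fst.aemeasurable]
      refine (hX.sub hZint).congr (ae_of_all _ fun p => ?_)
      simp [hgZ]
    have hgoal : ∫ x, ‖x - g x‖ ∂μ ≤ ε := by
      refine integral_norm_le_of_forall_continuous hDint fun h hh hh1 => ?_
      have hhDm : AEStronglyMeasurable (fun x => h x (x - g x)) μ :=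
        (ContinuousLinearMap.id ℝ (E →L[ℝ] ℝ)).aestronglyMeasurable_comp₂
          hh.aestronglyMeasurable hDm
      have hclm : ∀ {U : E × E → E}, Integrable U π → Integrable (fun p => h p.1 (U p)) π := by
        intro U hU
        refine hU.norm.mono' ((ContinuousLinearMap.id ℝ
          (E →L[ℝ] ℝ)).aestronglyMeasurable_comp₂ (hh.comp continuous_fst).aestronglyMeasurable
          hU.aestronglyMeasurable) (ae_of_all _ fun p => ?_)
        simpa using (h p.1).le_of_opNorm_le (hh1 p.1) (U p)
      refine ⟨hDint.norm.mono' hhDm (ae_of_all _ fun x => ?_), ?_⟩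
      · simpa using (h x).le_of_opNorm_le (hh1 x) (x - g x)
      have hpull : ∫ p, h p.1 p.2 ∂π = ∫ p, h p.1 (Z p) ∂π := by
        rw [← integral_condExp hm]
        refine integral_congr_ae ?_
        exact condExp_bilin_of_stronglyMeasurable_left (ContinuousLinearMap.id ℝ (E →L[ℝ] ℝ))
          (hh.stronglyMeasurable.comp_measurable (comap_measurable Prod.fst)) (hclm hY) hY
      have h3 := hle h hh hh1
      rw [← h1] at hhDm ⊢
      rw [integral_map measurable_fst.aemeasurable hhDm]
      refine le_trans (le_of_eq ?_) h3
      calc ∫ p, h p.1 (p.1 - g p.1) ∂π = ∫ p, (h p.1 p.1 - h p.1 (Z p)) ∂π := by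
            simp [hgZ]
        _ = ∫ p, (h p.1 p.1 - h p.1 p.2) ∂π := by
            rw [integral_sub (hclm hX) (hclm hZint), integral_sub (hclm hX) (hclm hY), hpull]
        _ = _ := by simp
    rw [← h1] at hDm hgoal
    rw [integral_map measurable_fst.aemeasurable hDm.norm] at hgoal
    simpa [hgZ] using hgoal
  · rintro ⟨π, hπ, h1, h2, hle⟩ f hfc hfl
    have hX := hfst π h1
    have hY := hsnd π h2
    set Z := π[(fun q : E × E => q.2) | MeasurableSpace.comap Prod.fst inferInstance] with hZ
    have hZint : Integrable Z π := integrable_condExp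
    have hf : ∀ {U : E × E → E}, Integrable U π → Integrable (fun p => f (U p)) π :=
      fun hU => hfl.integrable_comp hU
    have hjensen : ∫ p, f (Z p) ∂π ≤ ∫ p, f p.2 ∂π := by
      rw [← integral_condExp hm (f := fun p : E × E => f p.2)]
      exact integral_mono_ae (hf hZint) integrable_condExp
        (hfc.map_condExp_le_of_finiteDimensional hm hY (hf hY))
    have hXZ : Integrable (fun p => ‖p.1 - Z p‖) π := (hX.sub hZint).norm
    have hmove : ∫ p, f p.1 ∂π ≤ ∫ p, (f (Z p) + ‖p.1 - Z p‖) ∂π := by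
      refine integral_mono (hf hX) ((hf hZint).add hXZ) fun p => ?_
      have h3 := hfl.dist_le_mul p.1 (Z p)
      rw [Real.dist_eq, dist_eq_norm, NNReal.coe_one, one_mul] at h3
      have h4 := le_abs_self (f p.1 - f (Z p))
      simp only
      linarith
    rw [integral_add (hf hZint) hXZ] at hmove
    rw [← h1, ← h2, integral_map measurable_fst.aemeasurable
      hfl.continuous.aestronglyMeasurable, integral_map measurable_snd.aemeasurable
      hfl.continuous.aestronglyMeasurable]
    linarith
end
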